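/- Let Λc ⊆ Λ be nested lattices in ℝⁿ with finite quotient group Λ/Λc of cardinality M > 4, and let h1, h2 be nonzero coprime integers such that no nonzero element of Λ/Λc has order dividing h1 or h2. Fix P > 0, let g(w) = (2πP)^{−n/2} exp(−‖w‖²/(2P)), G(c) = Σ_{u∈c} g(u) for each coset c of Λc in Λ, and for each coset x define P_x(w) = (1/M) Σ_{cosets y} Σ_{u ∈ x, v ∈ y with h1·u + h2·v = w} (g(u)/G(x))·(g(v)/G(y)), with P̄(w) = (1/M) Σ_{cosets x} P_x(w). Let ε = ε_{Λc}(√(P/(h1²+h2²))) be the flatness factor of Λc. If ε < 1/(16e), then the mutual information between the uniformly distributed message X and the observation W = h1·U + h2·V, given explicitly by I(X;W) = Σ_{cosets x} Σ_{w∈Λ} (1/M)·P_x(w)·log₂(P_x(w)/P̄(w)), satisfies I(X;W) ≤ 16ε·(log₂ M − log₂(16ε)). -/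

import Mathlib

noncomputable section

/-- The Gaussian density `g(w) = (2πP)^{−n/2}·exp(−‖w‖²/(2P))` on `ℝⁿ`. -/
def gaussDensity {n : ℕ} (P : ℝ) (w : EuclideanSpace ℝ (Fin n)) : ℝ :=
  (2 * Real.pi * P) ^ (-(n : ℝ) / 2) * Real.exp (-‖w‖ ^ 2 / (2 * P))

/-- The coset of `Λc` in `Λ` corresponding to an element `c` of the quotient group `Λ/Λc`,
viewed as a subset of `ℝⁿ`. -/
def coset {n : ℕ} (Λ Λc : Submodule ℤ (EuclideanSpace ℝ (Fin n)))
    (c : Λ ⧸ Λc.comap Λ.subtype) : Set (EuclideanSpace ℝ (Fin n)) :=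
  {u | ∃ hu : u ∈ Λ, (Submodule.Quotient.mk (⟨u, hu⟩ : Λ) : Λ ⧸ Λc.comap Λ.subtype) = c}

/-- The total mass `G(c) = Σ_{u∈c} g(u)` of the Gaussian density on the coset `c`. -/
def cosetMass {n : ℕ} (Λ Λc : Submodule ℤ (EuclideanSpace ℝ (Fin n))) (P : ℝ)
    (c : Λ ⧸ Λc.comap Λ.subtype) : ℝ :=
  ∑' u : coset Λ Λc c, gaussDensity P (u : EuclideanSpace ℝ (Fin n))

/-- The conditional distribution of the relay's observation `W = h₁·U + h₂·V` given the
message (coset) `x`: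
`P_x(w) = (1/M)·Σ_{cosets y} Σ_{u∈x, v∈y, h₁·u+h₂·v=w} (g(u)/G(x))·(g(v)/G(y))`. -/
def condDist {n : ℕ} (Λ Λc : Submodule ℤ (EuclideanSpace ℝ (Fin n))) (P : ℝ) (h₁ h₂ : ℤ)
    (x : Λ ⧸ Λc.comap Λ.subtype) (w : EuclideanSpace ℝ (Fin n)) : ℝ :=
  (1 / (Nat.card (Λ ⧸ Λc.comap Λ.subtype) : ℝ)) *
    ∑' y : Λ ⧸ Λc.comap Λ.subtype,
      ∑' p : {p : EuclideanSpace ℝ (Fin n) × EuclideanSpace ℝ (Fin n) //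
          p.1 ∈ coset Λ Λc x ∧ p.2 ∈ coset Λ Λc y ∧
            (h₁ : ℝ) • p.1 + (h₂ : ℝ) • p.2 = w},
        (gaussDensity P p.val.1 / cosetMass Λ Λc P x) *
          (gaussDensity P p.val.2 / cosetMass Λ Λc P y)

/-- The unconditional distribution `P̄(w) = (1/M)·Σ_{cosets x} P_x(w)` of the observation. -/
def avgDist {n : ℕ} (Λ Λc : Submodule ℤ (EuclideanSpace ℝ (Fin n))) (P : ℝ) (h₁ h₂ : ℤ)
    (w : EuclideanSpace ℝ (Fin n)) : ℝ :=
  (1 / (Nat.card (Λ ⧸ Λc.comap Λ.subtype) : ℝ)) *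
    ∑' x : Λ ⧸ Λc.comap Λ.subtype, condDist Λ Λc P h₁ h₂ x w

/-- The lattice Gaussian sum `g_{z,θ}(L) = Σ_{λ∈L} (2πθ²)^{−n/2}·exp(−‖λ − z‖²/(2θ²))`. -/
def latticeGaussSum {n : ℕ} (L : Set (EuclideanSpace ℝ (Fin n))) (θ : ℝ)
    (z : EuclideanSpace ℝ (Fin n)) : ℝ :=
  ∑' l : L, (2 * Real.pi * θ ^ 2) ^ (-(n : ℝ) / 2) *
    Real.exp (-‖(l : EuclideanSpace ℝ (Fin n)) - z‖ ^ 2 / (2 * θ ^ 2))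

/-- The flatness factor `ε_Λ(θ) = sup_{x∈ℝⁿ} |covol(Λ)·g_{x,θ}(Λ) − 1|` of a full-rank
lattice `Λ`, where `covol(Λ)` is the volume of a fundamental domain of `Λ`. -/
def flatnessFactor {n : ℕ} (Λ : Submodule ℤ (EuclideanSpace ℝ (Fin n))) (θ : ℝ) : ℝ :=
  ⨆ x : EuclideanSpace ℝ (Fin n),
    |ZLattice.covolume Λ * latticeGaussSum (Λ : Set (EuclideanSpace ℝ (Fin n))) θ x - 1|

/-! With `s = h₁² + h₂²`, a rotation of `ℝⁿ × ℝⁿ` writes `g(u)·g(v)` as the Gaussian density of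
variance `s·P` at `h₁·u + h₂·v` times the Gaussian density of variance `P/s` at
`(h₂·u − h₁·v)/s`. As `h₁` and `h₂` are coprime, the pairs `(u, v)` in `x × y` observed as a
given `w` form a translate of `{(h₂·l, −h₁·l) | l ∈ Λc}`, so their total mass is a factor
depending on `w` alone times a Gaussian sum over a translate of `Λc` with variance `P/s`. By
flatness this sum varies at most by the factor `r = (1 + ε)/(1 − ε)`.

Multiplication by `h₂` is injective, hence bijective, on the finite group `Λ/Λc`: for each `x`
exactly one `y` is compatible with `w`. Comparing the masses for `(x, y)` and `(x', y')`, both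
at `w` and summed over all `w`, gives `P_x(w) ≤ r²·P_{x'}(w)`, whence `I(X;W) ≤ 2·log₂ r`.
-/

section Information

variable {ι X : Type*} {b K : ℝ}

theorem abs_mul_logb_div_le (hb : 1 < b) {p q : ℝ} (hp : 0 ≤ p) (hq : 0 ≤ q)
    (hpq : p ≤ K * q) (hqp : q ≤ K * p) :
    |p * Real.logb b (p / q)| ≤ p * Real.logb b K := by
  obtain rfl | hp := hp.eq_or_lt
  · simp
  obtain rfl | hq := hq.eq_or_lt
  · linarith
  have : 0 < K := pos_of_mul_pos_left (hp.trans_le hpq) hq.le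
  rw [abs_mul, abs_of_pos hp]
  refine mul_le_mul_of_nonneg_left (abs_le'.2 ⟨?_, ?_⟩) hp.le
  · exact Real.logb_le_logb_of_le hb (by positivity) ((div_le_iff₀ hq).2 hpq)
  · rw [← Real.logb_inv, inv_div]
    exact Real.logb_le_logb_of_le hb (by positivity) ((div_le_iff₀ hp).2 hqp)

theorem abs_tsum_mul_logb_div_le (hb : 1 < b) {p q : ι → ℝ} (hp : ∀ w, 0 ≤ p w)
    (hq : ∀ w, 0 ≤ q w) (hsum : HasSum p 1) (hpq : ∀ w, p w ≤ K * q w)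
    (hqp : ∀ w, q w ≤ K * p w) :
    |∑' w, p w * Real.logb b (p w / q w)| ≤ Real.logb b K := by
  rw [← one_mul (Real.logb b K), ← Real.norm_eq_abs]
  exact tsum_of_norm_bounded (hsum.mul_right _) fun w ↦
    abs_mul_logb_div_le hb (hp w) (hq w) (hpq w) (hqp w)

variable [Finite X] [Nonempty X]

theorem le_one_div_card_mul_tsum {f : X → ℝ} {m : ℝ} (hf : ∀ x, m ≤ f x) :
    m ≤ 1 / (Nat.card X : ℝ) * ∑' x, f x := by
  have := Fintype.ofFinite X
  have hsum := Finset.card_nsmul_le_sum Finset.univ f m fun x _ ↦ hf x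
  rw [nsmul_eq_mul, Finset.card_univ] at hsum
  rw [tsum_fintype, Nat.card_eq_fintype_card, one_div_mul_eq_div]
  exact (le_div_iff₀' (by exact_mod_cast Fintype.card_pos)).2 hsum

theorem one_div_card_mul_tsum_le {f : X → ℝ} {B : ℝ} (hf : ∀ x, f x ≤ B) :
    1 / (Nat.card X : ℝ) * ∑' x, f x ≤ B := by
  have := le_one_div_card_mul_tsum fun x ↦ neg_le_neg (hf x)
  rwa [tsum_neg, mul_neg, neg_le_neg_iff] at this

theorem tsum_tsum_mul_logb_div_average_le (hb : 1 < b) {p : X → ι → ℝ}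
    (hp : ∀ x w, 0 ≤ p x w) (hsum : ∀ x, HasSum (p x) 1) (hK : ∀ x x' w, p x w ≤ K * p x' w) :
    ∑' x, ∑' w, 1 / (Nat.card X : ℝ) * p x w *
      Real.logb b (p x w / (1 / (Nat.card X : ℝ) * ∑' x', p x' w)) ≤ Real.logb b K := by
  set avg : ι → ℝ := fun w ↦ 1 / (Nat.card X : ℝ) * ∑' x', p x' w with havg
  have havg_nonneg (w : ι) : 0 ≤ avg w := mul_nonneg (by positivity) (tsum_nonneg (hp · w))
  have havg_le (x : X) (w : ι) : avg w ≤ K * p x w :=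
    one_div_card_mul_tsum_le fun x' ↦ hK x' x w
  have hle_avg (x : X) (w : ι) : p x w ≤ K * avg w := by
    rw [havg, mul_left_comm, ← tsum_mul_left]
    exact le_one_div_card_mul_tsum fun x' ↦ hK x x' w
  have hdiv (x : X) : |∑' w, p x w * Real.logb b (p x w / avg w)| ≤ Real.logb b K :=
    abs_tsum_mul_logb_div_le hb (hp x) havg_nonneg (hsum x) (hle_avg x) (havg_le x)
  simp_rw [mul_assoc (1 / (Nat.card X : ℝ)), tsum_mul_left]
  exact one_div_card_mul_tsum_le fun x ↦ (abs_le.1 (hdiv x)).2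

end Information

theorem one_div_sixteen_mul_exp_one_lt_one : 1 / (16 * Real.exp 1) < 1 := by
  rw [div_lt_one (by positivity)]
  linarith [Real.one_le_exp zero_le_one]

theorem two_mul_logb_div_le {b ε M : ℝ} (hb : 1 < b) (hε : 0 ≤ ε)
    (hε' : ε < 1 / (16 * Real.exp 1)) (hM : 1 ≤ M) :
    2 * Real.logb b ((1 + ε) / (1 - ε)) ≤
      16 * ε * (Real.logb b M - Real.logb b (16 * ε)) := by
  obtain rfl | hpos := hε.eq_or_lt
  · simp
  have he : 1 < Real.exp 1 := Real.one_lt_exp_iff.2 one_pos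
  rw [lt_div_iff₀ (by positivity)] at hε'
  have hε_half : ε < 1 / 2 := by nlinarith
  have hratio : Real.log ((1 + ε) / (1 - ε)) ≤ 4 * ε := by
    have hsub : 0 < 1 - ε := by linarith
    refine (Real.log_le_sub_one_of_pos (by positivity)).trans ?_
    rw [sub_le_iff_le_add, div_le_iff₀ hsub]
    nlinarith
  have hlogM : 0 ≤ Real.log M := Real.log_nonneg hM
  have hlogε : Real.log (16 * ε) ≤ -1 := by
    rw [Real.log_le_iff_le_exp (by positivity), Real.exp_neg, ← one_div,
      le_div_iff₀ (by positivity)]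
    linarith
  unfold Real.logb
  rw [← sub_div, ← mul_div_assoc, ← mul_div_assoc]
  exact div_le_div_of_nonneg_right (by nlinarith) (Real.log_nonneg hb.le)

section LatticeSum

theorem summable_exp_quadratic_norm {E : Type*} [NormedAddCommGroup E] [NormedSpace ℝ E]
    [FiniteDimensional ℝ E] (L : Submodule ℤ E) [DiscreteTopology L] {a : ℝ} (ha : a < 0)
    (b : ℝ) : Summable fun l : L ↦ Real.exp (a * ‖(l : E)‖ ^ 2 + b * ‖(l : E)‖) := by
  have hclosed : IsClosed (L : Set E) :=
    have : DiscreteTopology L.toAddSubgroup := ‹DiscreteTopology L›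
    AddSubgroup.isClosed_of_discrete (H := L.toAddSubgroup)
  have hnorm : Filter.Tendsto (fun l : L ↦ ‖(l : E)‖) Filter.cofinite Filter.atTop :=
    tendsto_norm_comp_cofinite_atTop_of_isClosedEmbedding hclosed.isClosedEmbedding_subtypeVal
  have hrank : -(Module.finrank ℤ L : ℝ) - 1 < -Module.finrank ℤ L := sub_one_lt _
  exact summable_of_isBigO (ZLattice.summable_norm_rpow L _ hrank)
    ((rexp_neg_quadratic_isLittleO_rpow_atTop ha b _).isBigO.comp_tendsto hnorm)

variable {n : ℕ} {P θ : ℝ}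

theorem gaussDensity_pos (hP : 0 < P) (u : EuclideanSpace ℝ (Fin n)) : 0 < gaussDensity P u := by
  unfold gaussDensity
  positivity

theorem continuous_gaussDensity (P : ℝ) :
    Continuous (gaussDensity P : EuclideanSpace ℝ (Fin n) → ℝ) := by
  unfold gaussDensity
  fun_prop

theorem gaussDensity_sub_le (hP : 0 < P) {R : ℝ} {u z : EuclideanSpace ℝ (Fin n)}
    (hz : ‖z‖ ≤ R) :
    gaussDensity P (u - z) ≤ (2 * Real.pi * P) ^ (-(n : ℝ) / 2) *
      Real.exp (-(1 / (2 * P)) * ‖u‖ ^ 2 + R / P * ‖u‖) := by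
  unfold gaussDensity
  gcongr
  have hsq : ‖u‖ ^ 2 - 2 * R * ‖u‖ ≤ ‖u - z‖ ^ 2 := by
    rw [norm_sub_sq_real]
    nlinarith [real_inner_le_norm u z, norm_nonneg u, sq_nonneg ‖z‖]
  calc -‖u - z‖ ^ 2 / (2 * P) ≤ -(‖u‖ ^ 2 - 2 * R * ‖u‖) / (2 * P) := by gcongr
    _ = -(1 / (2 * P)) * ‖u‖ ^ 2 + R / P * ‖u‖ := by field_simp; ring

theorem gaussDensity_mul_gaussDensity (hP : 0 < P) {a b : ℝ} (hab : 0 < a ^ 2 + b ^ 2)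
    (u v : EuclideanSpace ℝ (Fin n)) :
    gaussDensity P u * gaussDensity P v =
      gaussDensity ((a ^ 2 + b ^ 2) * P) (a • u + b • v) *
        gaussDensity (P / (a ^ 2 + b ^ 2)) ((a ^ 2 + b ^ 2)⁻¹ • (b • u - a • v)) := by
  set s := a ^ 2 + b ^ 2
  have hrotation : ‖a • u + b • v‖ ^ 2 + ‖b • u - a • v‖ ^ 2 = s * (‖u‖ ^ 2 + ‖v‖ ^ 2) := by
    simp only [norm_add_sq_real, norm_sub_sq_real, norm_smul, inner_smul_left, inner_smul_right,
      mul_pow, Real.norm_eq_abs, sq_abs, conj_trivial]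
    ring
  have hconst : (2 * Real.pi * P) * (2 * Real.pi * P) =
      (2 * Real.pi * (s * P)) * (2 * Real.pi * (P / s)) := by
    field_simp
  have hexponent : -‖u‖ ^ 2 / (2 * P) + -‖v‖ ^ 2 / (2 * P) =
      -‖a • u + b • v‖ ^ 2 / (2 * (s * P)) +
        -‖s⁻¹ • (b • u - a • v)‖ ^ 2 / (2 * (P / s)) := by
    rw [norm_smul, mul_pow, Real.norm_eq_abs, sq_abs]
    field_simp
    linarith
  unfold gaussDensity
  rw [mul_mul_mul_comm, mul_mul_mul_comm ((2 * Real.pi * (s * P)) ^ _), ← Real.exp_add,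
    ← Real.exp_add, ← Real.mul_rpow (by positivity) (by positivity),
    ← Real.mul_rpow (by positivity) (by positivity), hconst, hexponent]

variable (L : Submodule ℤ (EuclideanSpace ℝ (Fin n)))

theorem flatnessFactor_nonneg (θ : ℝ) : 0 ≤ flatnessFactor L θ :=
  Real.iSup_nonneg fun _ ↦ abs_nonneg _

theorem latticeGaussSum_eq_tsum_gaussDensity (θ : ℝ) (z : EuclideanSpace ℝ (Fin n)) :
    latticeGaussSum L θ z = ∑' l : L, gaussDensity (θ ^ 2) (l.1 - z) :=
  rfl

theorem latticeGaussSum_add_mem (θ : ℝ) (z : EuclideanSpace ℝ (Fin n))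
    {m : EuclideanSpace ℝ (Fin n)} (hm : m ∈ L) :
    latticeGaussSum L θ (z + m) = latticeGaussSum L θ z := by
  simp only [latticeGaussSum_eq_tsum_gaussDensity]
  rw [← (Equiv.addRight (⟨m, hm⟩ : L)).tsum_eq]
  simp [add_sub_add_right_eq_sub]

variable [DiscreteTopology L]

theorem summable_gaussDensity_sub_bound (hP : 0 < P) (R : ℝ) :
    Summable fun l : L ↦ (2 * Real.pi * P) ^ (-(n : ℝ) / 2) *
      Real.exp (-(1 / (2 * P)) * ‖l.1‖ ^ 2 + R / P * ‖l.1‖) :=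
  (summable_exp_quadratic_norm L (neg_neg_of_pos (by positivity)) _).mul_left _

theorem summable_gaussDensity_sub (hP : 0 < P) (z : EuclideanSpace ℝ (Fin n)) :
    Summable fun l : L ↦ gaussDensity P (l.1 - z) :=
  (summable_gaussDensity_sub_bound L hP ‖z‖).of_nonneg_of_le
    (fun _ ↦ (gaussDensity_pos hP _).le) fun _ ↦ gaussDensity_sub_le hP le_rfl

theorem continuous_latticeGaussSum (hθ : 0 < θ) :
    Continuous (latticeGaussSum (L : Set (EuclideanSpace ℝ (Fin n))) θ) := by
  have hP : 0 < θ ^ 2 := by positivity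
  have hball (R : ℝ) : ContinuousOn (latticeGaussSum (L : Set (EuclideanSpace ℝ (Fin n))) θ)
      (Metric.ball 0 R) :=
    continuousOn_tsum (u := fun l : L ↦ _)
      (fun l ↦ ((continuous_gaussDensity (θ ^ 2)).comp (continuous_sub_left l.1)).continuousOn)
      (summable_gaussDensity_sub_bound L hP R) fun l z hz ↦
        (Real.norm_of_nonneg (gaussDensity_pos hP _).le).trans_le
          (gaussDensity_sub_le hP (mem_ball_zero_iff.1 hz).le)
  exact continuous_iff_continuousAt.2 fun z ↦ (hball (‖z‖ + 1)).continuousAt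
    (Metric.isOpen_ball.mem_nhds (by simp))

variable [IsZLattice ℝ L]

theorem abs_covolume_mul_latticeGaussSum_sub_one_le_flatnessFactor (hθ : 0 < θ)
    (z : EuclideanSpace ℝ (Fin n)) :
    |ZLattice.covolume L * latticeGaussSum L θ z - 1| ≤ flatnessFactor L θ := by
  have hcompact := IsZLattice.isCompact_range_of_periodic L
    (fun z ↦ |ZLattice.covolume L * latticeGaussSum (L : Set (EuclideanSpace ℝ (Fin n))) θ z - 1|)
    ((((continuous_latticeGaussSum L hθ).const_mul _).sub continuous_const).abs)
    fun z m hm ↦ by rw [latticeGaussSum_add_mem L θ z hm]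
  exact le_ciSup hcompact.bddAbove z

theorem latticeGaussSum_le_mul_latticeGaussSum (hθ : 0 < θ) (hε : flatnessFactor L θ < 1)
    (z z' : EuclideanSpace ℝ (Fin n)) :
    latticeGaussSum L θ z ≤
      (1 + flatnessFactor L θ) / (1 - flatnessFactor L θ) * latticeGaussSum L θ z' := by
  have hupper := (abs_le.1 (abs_covolume_mul_latticeGaussSum_sub_one_le_flatnessFactor L hθ z)).2
  have hlower := (abs_le.1 (abs_covolume_mul_latticeGaussSum_sub_one_le_flatnessFactor L hθ z')).1
  have hε0 := flatnessFactor_nonneg L θ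
  have hcovol : 0 < ZLattice.covolume L := ZLattice.covolume_pos L
  set ε := flatnessFactor L θ
  set V := ZLattice.covolume L
  have hsub : 0 < 1 - ε := sub_pos.2 hε
  refine le_of_mul_le_mul_left ?_ hcovol
  calc V * latticeGaussSum L θ z ≤ 1 + ε := by linarith
    _ = (1 + ε) / (1 - ε) * (1 - ε) := by field_simp
    _ ≤ (1 + ε) / (1 - ε) * (V * latticeGaussSum L θ z') := by gcongr; linarith
    _ = V * ((1 + ε) / (1 - ε) * latticeGaussSum L θ z') := by ring

end LatticeSum

section Coprime

variable {R E : Type*} [CommRing R] [AddCommGroup E] [Module R E] {a b : R}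

theorem smul_neg_smul_injective_of_isCoprime (hab : IsCoprime a b) :
    Function.Injective fun l : E ↦ (b • l, -(a • l)) := by
  obtain ⟨c, d, hcd⟩ := hab
  intro l l' hl
  obtain ⟨hb, ha⟩ := Prod.ext_iff.1 hl
  calc l = c • a • l + d • b • l := by rw [smul_smul, smul_smul, ← add_smul, hcd, one_smul]
    _ = c • a • l' + d • b • l' := by rw [neg_inj.1 ha, show b • l = b • l' from hb]
    _ = l' := by rw [smul_smul, smul_smul, ← add_smul, hcd, one_smul]

theorem exists_mem_smul_eq_of_smul_add_smul_eq_zero (hab : IsCoprime a b) (N : Submodule R E)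
    {u v : E} (hu : u ∈ N) (hv : v ∈ N) (huv : a • u + b • v = 0) :
    ∃ l ∈ N, b • l = u ∧ -(a • l) = v := by
  obtain ⟨c, d, hcd⟩ := hab
  refine ⟨d • u - c • v, N.sub_mem (N.smul_mem d hu) (N.smul_mem c hv), ?_, ?_⟩
  · calc b • (d • u - c • v) = (c * a + d * b) • u - c • (a • u + b • v) := by module
      _ = u := by rw [hcd, huv, one_smul, smul_zero, sub_zero]
  · calc -(a • (d • u - c • v)) = (c * a + d * b) • v - d • (a • u + b • v) := by module
      _ = v := by rw [hcd, huv, one_smul, smul_zero, sub_zero]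

end Coprime

section Coset

variable {n : ℕ} {Λ Λc : Submodule ℤ (EuclideanSpace ℝ (Fin n))} {P : ℝ}
  {x y : Λ ⧸ Λc.comap Λ.subtype} {u v w : EuclideanSpace ℝ (Fin n)}

theorem mem_coset_mk (w : Λ) : (w : EuclideanSpace ℝ (Fin n)) ∈
    coset Λ Λc (Submodule.Quotient.mk w) :=
  ⟨w.2, rfl⟩

theorem coset_nonempty (x : Λ ⧸ Λc.comap Λ.subtype) : (coset Λ Λc x).Nonempty := by
  obtain ⟨w, rfl⟩ := Submodule.Quotient.mk_surjective _ x
  exact ⟨w, mem_coset_mk w⟩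

theorem eq_of_mem_coset (hx : u ∈ coset Λ Λc x) (hy : u ∈ coset Λ Λc y) : x = y := by
  obtain ⟨_, rfl⟩ := hx
  obtain ⟨_, rfl⟩ := hy
  rfl

theorem mem_coset_iff_sub_mem (hle : Λc ≤ Λ) (hu : u ∈ coset Λ Λc x) :
    v ∈ coset Λ Λc x ↔ v - u ∈ Λc := by
  obtain ⟨huΛ, rfl⟩ := hu
  refine ⟨fun ⟨_, hvu⟩ ↦ (Submodule.Quotient.eq (Λc.comap Λ.subtype)).1 hvu, fun hvu ↦ ?_⟩
  have hv : v ∈ Λ := (Λ.sub_mem_iff_left huΛ).1 (hle hvu)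
  exact ⟨hv, (Submodule.Quotient.eq (Λc.comap Λ.subtype)).2 hvu⟩

theorem add_mem_coset (hle : Λc ≤ Λ) (hu : u ∈ coset Λ Λc x) (hv : v ∈ Λc) :
    u + v ∈ coset Λ Λc x :=
  (mem_coset_iff_sub_mem hle hu).2 (by simpa)

theorem smul_add_smul_mem_coset (h₁ h₂ : ℤ) (hu : u ∈ coset Λ Λc x) (hv : v ∈ coset Λ Λc y) :
    h₁ • u + h₂ • v ∈ coset Λ Λc (h₁ • x + h₂ • y) := by
  obtain ⟨hu, rfl⟩ := hu
  obtain ⟨hv, rfl⟩ := hv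
  exact mem_coset_mk (h₁ • (⟨u, hu⟩ : Λ) + h₂ • (⟨v, hv⟩ : Λ))

theorem coset_eq_range (hle : Λc ≤ Λ) (hu : u ∈ coset Λ Λc x) :
    coset Λ Λc x = Set.range fun l : Λc ↦ l.1 + u := by
  ext v
  rw [mem_coset_iff_sub_mem hle hu]
  exact ⟨fun hv ↦ ⟨⟨v - u, hv⟩, sub_add_cancel v u⟩, by rintro ⟨l, rfl⟩; simp⟩

theorem zsmul_quotient_injective {h : ℤ} (hh : ∀ l ∈ Λ, l ∉ Λc → h • l ∉ Λc) :
    Function.Injective fun x : Λ ⧸ Λc.comap Λ.subtype ↦ h • x := by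
  refine (injective_iff_map_eq_zero
    (zsmulAddGroupHom h : (Λ ⧸ Λc.comap Λ.subtype) →+ Λ ⧸ Λc.comap Λ.subtype)).2 fun x hx ↦ ?_
  obtain ⟨l, rfl⟩ := Submodule.Quotient.mk_surjective _ x
  rw [zsmulAddGroupHom_apply, ← Submodule.Quotient.mk_smul, Submodule.Quotient.mk_eq_zero] at hx
  exact (Submodule.Quotient.mk_eq_zero _).2 (not_imp_not.1 (hh l l.2) hx)

variable [DiscreteTopology Λc]

theorem summable_gaussDensity_coset (hle : Λc ≤ Λ) (hP : 0 < P)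
    (x : Λ ⧸ Λc.comap Λ.subtype) : Summable fun u : coset Λ Λc x ↦ gaussDensity P u.1 := by
  obtain ⟨u, hu⟩ := coset_nonempty x
  have hsum : Summable fun l : Λc ↦ gaussDensity P (l.1 + u) := by
    simpa using summable_gaussDensity_sub Λc hP (-u)
  have hinj : Function.Injective fun l : Λc ↦ l.1 + u :=
    (add_left_injective u).comp Subtype.val_injective
  rw [coset_eq_range hle hu]
  exact ((Function.Injective.hasSum_range_iff (f := gaussDensity P) hinj).2 hsum.hasSum).summable

theorem cosetMass_pos (hle : Λc ≤ Λ) (hP : 0 < P) (x : Λ ⧸ Λc.comap Λ.subtype) :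
    0 < cosetMass Λ Λc P x := by
  obtain ⟨u, hu⟩ := coset_nonempty x
  exact (summable_gaussDensity_coset hle hP x).tsum_pos (fun v ↦ (gaussDensity_pos hP v.1).le)
    ⟨u, hu⟩ (gaussDensity_pos hP u)

end Coset

section PairMass

variable {n : ℕ} {Λ Λc : Submodule ℤ (EuclideanSpace ℝ (Fin n))} {P r : ℝ} {h₁ h₂ : ℤ}
  {x y x' y' : Λ ⧸ Λc.comap Λ.subtype} {w : EuclideanSpace ℝ (Fin n)}

/-- The pairs of codewords from the cosets `x` and `y` that the relay observes as `w`. -/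
def pairFiber (Λ Λc : Submodule ℤ (EuclideanSpace ℝ (Fin n))) (h₁ h₂ : ℤ)
    (x y : Λ ⧸ Λc.comap Λ.subtype) (w : EuclideanSpace ℝ (Fin n)) :
    Set (EuclideanSpace ℝ (Fin n) × EuclideanSpace ℝ (Fin n)) :=
  {p | p.1 ∈ coset Λ Λc x ∧ p.2 ∈ coset Λ Λc y ∧ h₁ • p.1 + h₂ • p.2 = w}

/-- The unnormalised joint probability `Σ g(u)·g(v)` of the messages `x`, `y` and the
observation `w`, the sum being over `pairFiber`. -/
def pairMass (Λ Λc : Submodule ℤ (EuclideanSpace ℝ (Fin n))) (P : ℝ) (h₁ h₂ : ℤ)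
    (x y : Λ ⧸ Λc.comap Λ.subtype) (w : EuclideanSpace ℝ (Fin n)) : ℝ :=
  ∑' p : pairFiber Λ Λc h₁ h₂ x y w, gaussDensity P p.1.1 * gaussDensity P p.1.2

theorem pairFiber_eq_empty {c : Λ ⧸ Λc.comap Λ.subtype} (hw : w ∈ coset Λ Λc c)
    (hc : h₁ • x + h₂ • y ≠ c) : pairFiber Λ Λc h₁ h₂ x y w = ∅ := by
  rw [Set.eq_empty_iff_forall_notMem]
  rintro ⟨u, v⟩ ⟨hu, hv, rfl⟩
  exact hc (eq_of_mem_coset (smul_add_smul_mem_coset h₁ h₂ hu hv) hw)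

theorem pairMass_eq_zero {c : Λ ⧸ Λc.comap Λ.subtype} (P : ℝ) (hw : w ∈ coset Λ Λc c)
    (hc : h₁ • x + h₂ • y ≠ c) : pairMass Λ Λc P h₁ h₂ x y w = 0 := by
  rw [pairMass, pairFiber_eq_empty hw hc, tsum_empty]

theorem pairMass_nonneg (hP : 0 < P) : 0 ≤ pairMass Λ Λc P h₁ h₂ x y w :=
  tsum_nonneg fun _ ↦ (mul_pos (gaussDensity_pos hP _) (gaussDensity_pos hP _)).le

theorem pairFiber_nonempty (hle : Λc ≤ Λ) (hco : IsCoprime h₁ h₂)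
    (hw : w ∈ coset Λ Λc (h₁ • x + h₂ • y)) : (pairFiber Λ Λc h₁ h₂ x y w).Nonempty := by
  obtain ⟨a, b, hab⟩ := hco
  obtain ⟨u, hu⟩ := coset_nonempty x
  obtain ⟨v, hv⟩ := coset_nonempty y
  set d := w - (h₁ • u + h₂ • v) with hd
  have hdΛc : d ∈ Λc := (mem_coset_iff_sub_mem hle (smul_add_smul_mem_coset h₁ h₂ hu hv)).1 hw
  refine ⟨(u + a • d, v + b • d), add_mem_coset hle hu (Λc.smul_mem a hdΛc),
    add_mem_coset hle hv (Λc.smul_mem b hdΛc), ?_⟩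
  calc h₁ • (u + a • d) + h₂ • (v + b • d) = h₁ • u + h₂ • v + (a * h₁ + b * h₂) • d := by module
    _ = w := by rw [hab, one_smul, hd, add_sub_cancel]

theorem pairFiber_eq_range (hle : Λc ≤ Λ) (hco : IsCoprime h₁ h₂)
    {p : EuclideanSpace ℝ (Fin n) × EuclideanSpace ℝ (Fin n)}
    (hp : p ∈ pairFiber Λ Λc h₁ h₂ x y w) :
    pairFiber Λ Λc h₁ h₂ x y w = Set.range fun l : Λc ↦ p + (h₂ • l.1, -(h₁ • l.1)) := by
  obtain ⟨u, v⟩ := p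
  obtain ⟨hu, hv, huv⟩ := hp
  refine Set.Subset.antisymm ?_ ?_
  · rintro ⟨u', v'⟩ ⟨hu', hv', huv'⟩
    have hdiff : h₁ • (u' - u) + h₂ • (v' - v) = 0 := by
      rw [← sub_eq_zero.2 (huv'.trans huv.symm)]
      module
    obtain ⟨l, hl, hlu, hlv⟩ := exists_mem_smul_eq_of_smul_add_smul_eq_zero hco Λc
      ((mem_coset_iff_sub_mem hle hu).1 hu') ((mem_coset_iff_sub_mem hle hv).1 hv') hdiff
    exact ⟨⟨l, hl⟩, by simp [hlu, hlv]⟩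
  · rintro _ ⟨l, rfl⟩
    refine ⟨add_mem_coset hle hu (Λc.smul_mem h₂ l.2),
      add_mem_coset hle hv (Λc.neg_mem (Λc.smul_mem h₁ l.2)), ?_⟩
    rw [← huv]
    simp only [Prod.fst_add, Prod.snd_add]
    module

theorem sq_add_sq_pos_of_isCoprime (hco : IsCoprime h₁ h₂) : 0 < (h₁ : ℝ) ^ 2 + (h₂ : ℝ) ^ 2 :=
  (by positivity : 0 ≤ (h₁ : ℝ) ^ 2 + (h₂ : ℝ) ^ 2).lt_of_ne'
    (by exact_mod_cast IsCoprime.sq_add_sq_ne_zero hco)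

theorem exists_pairMass_eq (hle : Λc ≤ Λ) (hP : 0 < P) (hco : IsCoprime h₁ h₂)
    (hw : w ∈ coset Λ Λc (h₁ • x + h₂ • y)) :
    ∃ z : EuclideanSpace ℝ (Fin n), pairMass Λ Λc P h₁ h₂ x y w =
      gaussDensity (((h₁ : ℝ) ^ 2 + (h₂ : ℝ) ^ 2) * P) w *
        latticeGaussSum Λc (Real.sqrt (P / ((h₁ : ℝ) ^ 2 + (h₂ : ℝ) ^ 2))) z := by
  obtain ⟨⟨u, v⟩, hp⟩ := pairFiber_nonempty hle hco hw
  have hs := sq_add_sq_pos_of_isCoprime hco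
  set s := (h₁ : ℝ) ^ 2 + (h₂ : ℝ) ^ 2 with hs_def
  have hinj : Function.Injective fun l : Λc ↦ (u, v) + (h₂ • l.1, -(h₁ • l.1)) :=
    (add_right_injective (u, v)).comp
      ((smul_neg_smul_injective_of_isCoprime hco).comp Subtype.val_injective)
  refine ⟨s⁻¹ • (h₁ • v - h₂ • u), ?_⟩
  rw [pairMass, pairFiber_eq_range hle hco hp, tsum_range
    (fun p : EuclideanSpace ℝ (Fin n) × EuclideanSpace ℝ (Fin n) ↦
      gaussDensity P p.1 * gaussDensity P p.2) hinj,
    latticeGaussSum_eq_tsum_gaussDensity, Real.sq_sqrt (by positivity), ← tsum_mul_left]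
  refine tsum_congr fun l ↦ ?_
  have hobs : (h₁ : ℝ) • (u + h₂ • l.1) + (h₂ : ℝ) • (v + -(h₁ • l.1)) = w := by
    rw [← hp.2.2]
    simp only [← Int.cast_smul_eq_zsmul ℝ]
    module
  have hcenter : s⁻¹ • ((h₂ : ℝ) • (u + h₂ • l.1) - (h₁ : ℝ) • (v + -(h₁ • l.1))) =
      l.1 - s⁻¹ • (h₁ • v - h₂ • u) := by
    rw [eq_sub_iff_add_eq, ← smul_add, inv_smul_eq_iff₀ hs.ne', hs_def]
    simp only [← Int.cast_smul_eq_zsmul ℝ]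
    module
  simp only [Prod.fst_add, Prod.snd_add]
  rw [gaussDensity_mul_gaussDensity hP hs, hobs, hcenter]

theorem pairMass_le_mul_pairMass (hle : Λc ≤ Λ) (hP : 0 < P) (hco : IsCoprime h₁ h₂)
    (hr : ∀ z z' : EuclideanSpace ℝ (Fin n),
      latticeGaussSum Λc (Real.sqrt (P / ((h₁ : ℝ) ^ 2 + (h₂ : ℝ) ^ 2))) z ≤
        r * latticeGaussSum Λc (Real.sqrt (P / ((h₁ : ℝ) ^ 2 + (h₂ : ℝ) ^ 2))) z')
    (hxy : h₁ • x + h₂ • y = h₁ • x' + h₂ • y') (w : Λ) :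
    pairMass Λ Λc P h₁ h₂ x y w ≤ r * pairMass Λ Λc P h₁ h₂ x' y' w := by
  by_cases hw : h₁ • x + h₂ • y = Submodule.Quotient.mk w
  · have hs := sq_add_sq_pos_of_isCoprime hco
    obtain ⟨z, hz⟩ := exists_pairMass_eq hle hP hco (hw ▸ mem_coset_mk w)
    obtain ⟨z', hz'⟩ := exists_pairMass_eq hle hP hco ((hxy.symm.trans hw) ▸ mem_coset_mk w)
    rw [hz, hz', mul_left_comm]
    exact mul_le_mul_of_nonneg_left (hr z z') (gaussDensity_pos (mul_pos hs hP) _).le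
  · rw [pairMass_eq_zero P (mem_coset_mk w) hw,
      pairMass_eq_zero P (mem_coset_mk w) (hxy ▸ hw), mul_zero]

variable [DiscreteTopology Λc]

theorem hasSum_pairMass (hle : Λc ≤ Λ) (hP : 0 < P) (h₁ h₂ : ℤ)
    (x y : Λ ⧸ Λc.comap Λ.subtype) :
    HasSum (fun w : Λ ↦ pairMass Λ Λc P h₁ h₂ x y w)
      (cosetMass Λ Λc P x * cosetMass Λ Λc P y) := by
  have hx := summable_gaussDensity_coset hle hP x
  have hy := summable_gaussDensity_coset hle hP y
  have hprod : HasSum (fun p : coset Λ Λc x × coset Λ Λc y ↦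
      gaussDensity P p.1.1 * gaussDensity P p.2.1) (cosetMass Λ Λc P x * cosetMass Λ Λc P y) :=
    hx.hasSum.mul hy.hasSum <| hx.mul_of_nonneg hy (fun _ ↦ (gaussDensity_pos hP _).le)
      fun _ ↦ (gaussDensity_pos hP _).le
  let observe (p : coset Λ Λc x × coset Λ Λc y) : Λ :=
    ⟨h₁ • p.1.1 + h₂ • p.2.1, (smul_add_smul_mem_coset h₁ h₂ p.1.2 p.2.2).1⟩
  let fiberEquiv (w : Λ) : observe ⁻¹' {w} ≃ pairFiber Λ Λc h₁ h₂ x y w :=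
    { toFun p := ⟨(p.1.1.1, p.1.2.1), p.1.1.2, p.1.2.2, congrArg Subtype.val p.2⟩
      invFun p := ⟨(⟨p.1.1, p.2.1⟩, ⟨p.1.2, p.2.2.1⟩), Subtype.ext p.2.2.2⟩
      left_inv _ := rfl
      right_inv _ := rfl }
  have hfiber (w : Λ) : ∑' p : observe ⁻¹' {w}, gaussDensity P p.1.1.1 * gaussDensity P p.1.2.1 =
      pairMass Λ Λc P h₁ h₂ x y w :=
    (fiberEquiv w).tsum_eq fun p ↦ gaussDensity P p.1.1 * gaussDensity P p.1.2
  simpa only [hfiber] using hprod.tsum_fiberwise observe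

end PairMass

section CondDist

variable {n : ℕ} {Λ Λc : Submodule ℤ (EuclideanSpace ℝ (Fin n))} {P r : ℝ} {h₁ h₂ : ℤ}
  {x y x' y' : Λ ⧸ Λc.comap Λ.subtype}

theorem condDist_eq_tsum_pairMass (x : Λ ⧸ Λc.comap Λ.subtype) (w : EuclideanSpace ℝ (Fin n)) :
    condDist Λ Λc P h₁ h₂ x w = 1 / (Nat.card (Λ ⧸ Λc.comap Λ.subtype) : ℝ) *
      ∑' y, pairMass Λ Λc P h₁ h₂ x y w / (cosetMass Λ Λc P x * cosetMass Λ Λc P y) := by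
  unfold condDist
  congr 1
  refine tsum_congr fun y ↦ ?_
  have hfiber : pairFiber Λ Λc h₁ h₂ x y w = {p | p.1 ∈ coset Λ Λc x ∧ p.2 ∈ coset Λ Λc y ∧
      (h₁ : ℝ) • p.1 + (h₂ : ℝ) • p.2 = w} := by
    simp only [pairFiber, Int.cast_smul_eq_zsmul]
  rw [pairMass, hfiber, ← tsum_div_const]
  simp only [div_mul_div_comm]
  rfl

theorem condDist_nonneg (hP : 0 < P) (x : Λ ⧸ Λc.comap Λ.subtype)
    (w : EuclideanSpace ℝ (Fin n)) : 0 ≤ condDist Λ Λc P h₁ h₂ x w := by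
  have hG (c : Λ ⧸ Λc.comap Λ.subtype) : 0 ≤ cosetMass Λ Λc P c :=
    tsum_nonneg fun _ ↦ (gaussDensity_pos hP _).le
  rw [condDist_eq_tsum_pairMass]
  exact mul_nonneg (by positivity) <| tsum_nonneg fun y ↦
    div_nonneg (pairMass_nonneg hP) (mul_nonneg (hG x) (hG y))

theorem condDist_eq_of_smul_add_smul_eq_mk (P : ℝ)
    (hinj : Function.Injective fun c : Λ ⧸ Λc.comap Λ.subtype ↦ h₂ • c) {w : Λ}
    (hw : h₁ • x + h₂ • y = Submodule.Quotient.mk w) :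
    condDist Λ Λc P h₁ h₂ x w = 1 / (Nat.card (Λ ⧸ Λc.comap Λ.subtype) : ℝ) *
      (pairMass Λ Λc P h₁ h₂ x y w / (cosetMass Λ Λc P x * cosetMass Λ Λc P y)) := by
  rw [condDist_eq_tsum_pairMass, tsum_eq_single y fun y' hy' ↦ ?_]
  have hne : h₁ • x + h₂ • y' ≠ Submodule.Quotient.mk w := fun hw' ↦
    hy' (hinj (add_left_cancel (hw'.trans hw.symm)))
  rw [pairMass_eq_zero P (mem_coset_mk w) hne, zero_div]

variable [DiscreteTopology Λc]

theorem hasSum_condDist [Finite (Λ ⧸ Λc.comap Λ.subtype)] (hle : Λc ≤ Λ) (hP : 0 < P)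
    (h₁ h₂ : ℤ) (x : Λ ⧸ Λc.comap Λ.subtype) :
    HasSum (fun w : Λ ↦ condDist Λ Λc P h₁ h₂ x w) 1 := by
  have := Fintype.ofFinite (Λ ⧸ Λc.comap Λ.subtype)
  have hG (c : Λ ⧸ Λc.comap Λ.subtype) : cosetMass Λ Λc P c ≠ 0 := (cosetMass_pos hle hP c).ne'
  have hy (y : Λ ⧸ Λc.comap Λ.subtype) : HasSum (fun w : Λ ↦ pairMass Λ Λc P h₁ h₂ x y w /
      (cosetMass Λ Λc P x * cosetMass Λ Λc P y)) 1 := by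
    simpa [hG] using (hasSum_pairMass hle hP h₁ h₂ x y).div_const
      (cosetMass Λ Λc P x * cosetMass Λ Λc P y)
  have hcard : 1 / (Nat.card (Λ ⧸ Λc.comap Λ.subtype) : ℝ) *
      ∑ _y : Λ ⧸ Λc.comap Λ.subtype, (1 : ℝ) = 1 := by
    simp
  simpa only [condDist_eq_tsum_pairMass, tsum_fintype, hcard] using
    (hasSum_sum fun y (_ : y ∈ Finset.univ) ↦ hy y).mul_left
      (1 / (Nat.card (Λ ⧸ Λc.comap Λ.subtype) : ℝ))

theorem cosetMass_mul_cosetMass_le_mul (hle : Λc ≤ Λ) (hP : 0 < P) (hco : IsCoprime h₁ h₂)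
    (hr : ∀ z z' : EuclideanSpace ℝ (Fin n),
      latticeGaussSum Λc (Real.sqrt (P / ((h₁ : ℝ) ^ 2 + (h₂ : ℝ) ^ 2))) z ≤
        r * latticeGaussSum Λc (Real.sqrt (P / ((h₁ : ℝ) ^ 2 + (h₂ : ℝ) ^ 2))) z')
    (hxy : h₁ • x + h₂ • y = h₁ • x' + h₂ • y') :
    cosetMass Λ Λc P x * cosetMass Λ Λc P y ≤
      r * (cosetMass Λ Λc P x' * cosetMass Λ Λc P y') :=
  hasSum_le (pairMass_le_mul_pairMass hle hP hco hr hxy) (hasSum_pairMass hle hP h₁ h₂ x y)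
    ((hasSum_pairMass hle hP h₁ h₂ x' y').mul_left r)

theorem condDist_le_sq_mul_condDist [Finite (Λ ⧸ Λc.comap Λ.subtype)] (hle : Λc ≤ Λ)
    (hP : 0 < P) (hco : IsCoprime h₁ h₂)
    (hinj : Function.Injective fun c : Λ ⧸ Λc.comap Λ.subtype ↦ h₂ • c)
    (hr : ∀ z z' : EuclideanSpace ℝ (Fin n),
      latticeGaussSum Λc (Real.sqrt (P / ((h₁ : ℝ) ^ 2 + (h₂ : ℝ) ^ 2))) z ≤
        r * latticeGaussSum Λc (Real.sqrt (P / ((h₁ : ℝ) ^ 2 + (h₂ : ℝ) ^ 2))) z')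
    (x x' : Λ ⧸ Λc.comap Λ.subtype) (w : Λ) :
    condDist Λ Λc P h₁ h₂ x w ≤ r ^ 2 * condDist Λ Λc P h₁ h₂ x' w := by
  have hsurj (c : Λ ⧸ Λc.comap Λ.subtype) :
      ∃ d, h₁ • c + h₂ • d = Submodule.Quotient.mk w := by
    obtain ⟨d, hd⟩ := Finite.surjective_of_injective hinj (Submodule.Quotient.mk w - h₁ • c)
    exact ⟨d, add_eq_of_eq_sub' hd⟩
  obtain ⟨y, hy⟩ := hsurj x
  obtain ⟨y', hy'⟩ := hsurj x'
  have hG := mul_pos (cosetMass_pos hle hP x) (cosetMass_pos hle hP y)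
  have hG' := mul_pos (cosetMass_pos hle hP x') (cosetMass_pos hle hP y')
  have hmass := pairMass_le_mul_pairMass hle hP hco hr (hy.trans hy'.symm) w
  have hnorm := cosetMass_mul_cosetMass_le_mul hle hP hco hr (hy'.trans hy.symm)
  rw [condDist_eq_of_smul_add_smul_eq_mk P hinj hy, condDist_eq_of_smul_add_smul_eq_mk P hinj hy',
    mul_left_comm]
  refine mul_le_mul_of_nonneg_left ?_ (by positivity)
  rw [← mul_div_assoc, div_le_div_iff₀ hG hG']
  set m := pairMass Λ Λc P h₁ h₂ x y w
  set m' := pairMass Λ Λc P h₁ h₂ x' y' w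
  set G := cosetMass Λ Λc P x * cosetMass Λ Λc P y
  set G' := cosetMass Λ Λc P x' * cosetMass Λ Λc P y'
  have hm : 0 ≤ m := pairMass_nonneg hP
  calc m * G' ≤ (r * m') * (r * G) :=
        mul_le_mul hmass hnorm hG'.le (hm.trans hmass)
    _ = r ^ 2 * m' * G := by ring

end CondDist

theorem stmt_2_general {n : ℕ} (Λ Λc : Submodule ℤ (EuclideanSpace ℝ (Fin n)))
    [DiscreteTopology Λc] [IsZLattice ℝ Λc] (hle : Λc ≤ Λ)
    [Finite (Λ ⧸ Λc.comap Λ.subtype)] (h₁ h₂ : ℤ) (hco : IsCoprime h₁ h₂)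
    (horder : ∀ l ∈ Λ, l ∉ Λc → h₂ • l ∉ Λc) (P : ℝ) (hP : 0 < P)
    (hε : flatnessFactor Λc (Real.sqrt (P / ((h₁ : ℝ) ^ 2 + (h₂ : ℝ) ^ 2))) < 1) :
    (∑' x : Λ ⧸ Λc.comap Λ.subtype, ∑' w : Λ,
        (1 / (Nat.card (Λ ⧸ Λc.comap Λ.subtype) : ℝ)) *
          condDist Λ Λc P h₁ h₂ x (w : EuclideanSpace ℝ (Fin n)) *
          Real.logb 2 (condDist Λ Λc P h₁ h₂ x (w : EuclideanSpace ℝ (Fin n)) /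
            avgDist Λ Λc P h₁ h₂ (w : EuclideanSpace ℝ (Fin n)))) ≤
      2 * Real.logb 2 ((1 + flatnessFactor Λc (Real.sqrt (P / ((h₁ : ℝ) ^ 2 + (h₂ : ℝ) ^ 2)))) /
        (1 - flatnessFactor Λc (Real.sqrt (P / ((h₁ : ℝ) ^ 2 + (h₂ : ℝ) ^ 2))))) := by
  set θ := Real.sqrt (P / ((h₁ : ℝ) ^ 2 + (h₂ : ℝ) ^ 2))
  have hθ : 0 < θ := Real.sqrt_pos.2 (div_pos hP (sq_add_sq_pos_of_isCoprime hco))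
  have hflat := latticeGaussSum_le_mul_latticeGaussSum Λc hθ hε
  have hcondDist := condDist_le_sq_mul_condDist hle hP hco (zsmul_quotient_injective horder) hflat
  refine (tsum_tsum_mul_logb_div_average_le (p := fun x (w : Λ) ↦ condDist Λ Λc P h₁ h₂ x w)
    one_lt_two (fun x w ↦ condDist_nonneg hP x w) (hasSum_condDist hle hP h₁ h₂) hcondDist).trans_eq
    ?_
  rw [Real.logb_pow, Nat.cast_ofNat]

/-- **strong secrecy: mutual-information bound.** Let `Λc ⊆ Λ` be nested
lattices in `ℝⁿ` with finite quotient `Λ/Λc` of cardinality `M > 4`, and let `h₁, h₂` be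
nonzero coprime integers such that no nonzero element of `Λ/Λc` has order dividing `h₁` or
`h₂`. Fix `P > 0` and let `ε = ε_{Λc}(√(P/(h₁²+h₂²)))` be the flatness factor of `Λc`. If
`ε < 1/(16e)`, then the mutual information between the uniform message `X` and the
observation `W = h₁·U + h₂·V`, given by
`I(X;W) = Σ_x Σ_{w∈Λ} (1/M)·P_x(w)·log₂(P_x(w)/P̄(w))` (terms with `P_x(w) = 0` are `0`),
satisfies `I(X;W) ≤ 16ε·(log₂ M − log₂(16ε))`. -/
theorem stmt_2 {n : ℕ} (Λ Λc : Submodule ℤ (EuclideanSpace ℝ (Fin n)))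
    [DiscreteTopology Λ] [DiscreteTopology Λc] [IsZLattice ℝ Λc] (hle : Λc ≤ Λ)
    [Finite (Λ ⧸ Λc.comap Λ.subtype)] (M : ℕ) (hM : Nat.card (Λ ⧸ Λc.comap Λ.subtype) = M)
    (hM4 : 4 < M)
    (h₁ h₂ : ℤ) (hh₁ : h₁ ≠ 0) (hh₂ : h₂ ≠ 0) (hco : IsCoprime h₁ h₂)
    (horder : ∀ l ∈ Λ, l ∉ Λc → h₁ • l ∉ Λc ∧ h₂ • l ∉ Λc)
    (P : ℝ) (hP : 0 < P)
    (hε : flatnessFactor Λc (Real.sqrt (P / ((h₁ : ℝ) ^ 2 + (h₂ : ℝ) ^ 2))) <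
      1 / (16 * Real.exp 1)) :
    (∑' x : Λ ⧸ Λc.comap Λ.subtype, ∑' w : Λ,
        (1 / (M : ℝ)) * condDist Λ Λc P h₁ h₂ x (w : EuclideanSpace ℝ (Fin n)) *
          Real.logb 2 (condDist Λ Λc P h₁ h₂ x (w : EuclideanSpace ℝ (Fin n)) /
            avgDist Λ Λc P h₁ h₂ (w : EuclideanSpace ℝ (Fin n)))) ≤
      16 * flatnessFactor Λc (Real.sqrt (P / ((h₁ : ℝ) ^ 2 + (h₂ : ℝ) ^ 2))) *
        (Real.logb 2 M -
          Real.logb 2 (16 * flatnessFactor Λc (Real.sqrt (P / ((h₁ : ℝ) ^ 2 + (h₂ : ℝ) ^ 2))))) := by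
  subst hM
  exact (stmt_2_general Λ Λc hle h₁ h₂ hco (fun l hl hlc ↦ (horder l hl hlc).2) P hP
    (hε.trans one_div_sixteen_mul_exp_one_lt_one)).trans
    (two_mul_logb_div_le one_lt_two (flatnessFactor_nonneg _ _) hε
      (Nat.one_le_cast.2 Nat.card_pos))

end
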